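/- Let A := N/d + c·L and for z > 0 define r(z) := (N + A)·log₂ z + log₂((A+1)·e^{A+1}) + N·log₂ d. For any realization of Algorithm RFD on x^n with rescale partition R, and any piecewise stationary model PWS for sequences of length n with partition S, it holds that ℓ(x^n; RFD) − ℓ(x^n; PWS) ≤ |S|·[ (1−c)·L·log₂(e·(L+1)) + log₂((1−c)·L) + r(L+1) ] + (|R| − 1)·r(L+1). -/

import Mathlib

open Finset

/-- One call to `Update`: if the total would exceed `T`, rescale first
(replace each count `s i` by `max 1 ⌊cf * s i⌋`), then add `d` to the count of `x`. -/
noncomputable def RFDupdate {N : ℕ} (cf : ℝ) (d T : ℕ) (s : Fin N → ℕ) (x : Fin N) : Fin N → ℕ :=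
  let s' : Fin N → ℕ :=
    if T < (∑ i, s i) + d then (fun i => max 1 ⌊cf * (s i : ℝ)⌋₊) else s
  fun i => if i = x then s' i + d else s' i

/-- State (counts) of Algorithm RFD after `k` update steps on the input sequence `xs`
(0-indexed: the `k`-th step processes symbol `xs (k-1)`). -/
noncomputable def RFDcounts {N : ℕ} (cf : ℝ) (d T : ℕ) (s0 : Fin N → ℕ) (xs : ℕ → Fin N) : ℕ → Fin N → ℕ
  | 0 => s0
  | k + 1 => RFDupdate cf d T (RFDcounts cf d T s0 xs k) (xs k)

/-- Total counter `t` after `k` update steps. -/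
noncomputable def RFDtotal {N : ℕ} (cf : ℝ) (d T : ℕ) (s0 : Fin N → ℕ) (xs : ℕ → Fin N) (k : ℕ) : ℕ :=
  ∑ i, RFDcounts cf d T s0 xs k i

/-- A rescale takes place in step `k ≥ 1` iff at the beginning of step `k`
the total plus `d` exceeds `T`. -/
def RFDrescaleAt {N : ℕ} (cf : ℝ) (d T : ℕ) (s0 : Fin N → ℕ) (xs : ℕ → Fin N) (k : ℕ) : Prop :=
  1 ≤ k ∧ T < RFDtotal cf d T s0 xs (k - 1) + d

/-- `P` is a partition of the integer interval `[a,b]` into consecutive closed intervals,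
listed in order; an interval `[i,j]` is represented by the pair `(i,j)`. -/
def ConsecPartition (a b : ℕ) (P : List (ℕ × ℕ)) : Prop :=
  P ≠ [] ∧ P.head?.map Prod.fst = some a ∧ P.getLast?.map Prod.snd = some b ∧
    (∀ p ∈ P, p.1 ≤ p.2) ∧ P.Chain' (fun p q => q.1 = p.2 + 1)

/-- `P` is the rescale partition of `[a,b]`: a partition into consecutive intervals `[i,j]`
such that no rescale occurs at steps `i,…,j-1`, and a rescale occurs at step `j` whenever
`j < b` (for the last interval, a rescale at its last step is optional). -/
def RFDrescalePartition {N : ℕ} (cf : ℝ) (d T : ℕ) (s0 : Fin N → ℕ) (xs : ℕ → Fin N)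
    (a b : ℕ) (P : List (ℕ × ℕ)) : Prop :=
  ConsecPartition a b P ∧
    (∀ p ∈ P, ∀ k, p.1 ≤ k → k < p.2 → ¬ RFDrescaleAt cf d T s0 xs k) ∧
    (∀ p ∈ P, p.2 < b → RFDrescaleAt cf d T s0 xs p.2)

/-- The probability `RFD(x; x^k)` that Algorithm RFD assigns to symbol `x` after `k` steps. -/
noncomputable def RFDprob {N : ℕ} (cf : ℝ) (d T : ℕ) (s0 : Fin N → ℕ) (xs : ℕ → Fin N)
    (k : ℕ) (x : Fin N) : ℝ :=
  (RFDcounts cf d T s0 xs k x : ℝ) / (RFDtotal cf d T s0 xs k : ℝ)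

/-- Ideal code length (in bits) of Algorithm RFD on steps `a,…,b` (1-indexed steps;
step `k` encodes symbol `xs (k-1)` using the prediction after `k-1` steps). -/
noncomputable def RFDcodeLen {N : ℕ} (cf : ℝ) (d T : ℕ) (s0 : Fin N → ℕ) (xs : ℕ → Fin N)
    (a b : ℕ) : ℝ :=
  -∑ k ∈ Finset.Icc a b, Real.logb 2 (RFDprob cf d T s0 xs (k - 1) (xs (k - 1)))

/-- Ideal code length (in bits) of a fixed distribution `p` on steps `a,…,b`. -/
noncomputable def distCodeLen {N : ℕ} (p : Fin N → ℝ) (xs : ℕ → Fin N) (a b : ℕ) : ℝ :=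
  -∑ k ∈ Finset.Icc a b, Real.logb 2 (p (xs (k - 1)))

/-- The redundancy function `r(z) = (N + A)·log₂ z + log₂((A+1)·e^(A+1)) + N·log₂ d`. -/
noncomputable def rBound (N d : ℕ) (A z : ℝ) : ℝ :=
  ((N : ℝ) + A) * Real.logb 2 z + Real.logb 2 ((A + 1) * Real.exp (A + 1))
    + (N : ℝ) * Real.logb 2 d

/-- Ideal code length of a piecewise stationary model with partition `S` (a list of
consecutive intervals of `[1,n]`) and per-segment distributions `pI`: on each segment
`I = [a,b] ∈ S`, symbol `x_k` (`a ≤ k ≤ b`) is coded with `-log₂ p_I(x_k)` bits. -/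
noncomputable def pwsCodeLen {N : ℕ} (S : List (ℕ × ℕ)) (pI : ℕ × ℕ → Fin N → ℝ)
    (xs : ℕ → Fin N) : ℝ :=
  (S.map (fun q => -∑ k ∈ Finset.Icc q.1 q.2, Real.logb 2 (pI q (xs (k - 1))))).sum

/-! Cut every segment of the model after each step in which a rescale occurs. Until the next rescale
RFD is a Pólya urn: the counts start at some `s x ≥ 1`, and every symbol adds `d` to its own count.
Comparing the urn with the size of a type class, which bounds the probability of a sequence under
any stationary model, shows that an urn with initial total at most `d (D + 1)`, `D ≥ 0`, loses at
most `D log₂ (e m) + N log₂ (d m)` bits over `m` steps. A stretch has `m ≤ L + 1` steps, because the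
total grows from at least `N` to at most `T`. A stretch that follows a rescale has `D = A`, while
the first stretch of a segment may start with a total as large as `T`, which is below `d (D + 1)`
for `D = A + (1 - c) L`. There is one first stretch per segment, and the rescales count the
others. -/

section Intervals

/-- A cost `ℓ i j` attached to the integer intervals `[i, j]` is subadditive if cutting a nonempty
interval into two consecutive ones does not decrease the total cost. Code lengths are such costs. -/
def IntervalSubadditive {M : Type*} [Add M] [LE M] (ℓ : ℕ → ℕ → M) : Prop :=
  ∀ ⦃i j k : ℕ⦄, i ≤ j → j < k → ℓ i k ≤ ℓ i j + ℓ (j + 1) k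

theorem sum_Icc_eq_sum_Icc_add_sum_Icc {M : Type*} [AddCommMonoid M] (f : ℕ → M) {i j k : ℕ}
    (hij : i ≤ j) (hjk : j < k) :
    ∑ l ∈ Icc i k, f l = ∑ l ∈ Icc i j, f l + ∑ l ∈ Icc (j + 1) k, f l := by
  simp only [← Ico_add_one_right_eq_Icc]
  exact (sum_Ico_consecutive f (by omega) (by omega)).symm

theorem card_filter_Ico_eq_add (Q : ℕ → Prop) [DecidablePred Q] {i j k : ℕ}
    (hij : i ≤ j) (hjk : j < k) :
    #{l ∈ Ico i k | Q l}
      = #{l ∈ Ico i j | Q l} + (if Q j then 1 else 0) + #{l ∈ Ico (j + 1) k | Q l} := by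
  simp only [card_filter]
  rw [← sum_Ico_consecutive _ hij hjk.le, sum_eq_sum_Ico_succ_bot hjk, add_assoc]

theorem intervalSubadditive_card_filter_Ico_add_one (Q : ℕ → Prop) [DecidablePred Q] :
    IntervalSubadditive fun i j => #{l ∈ Ico i j | Q l} + 1 := by
  intro i j k hij hjk
  dsimp only
  rw [card_filter_Ico_eq_add Q hij hjk]
  split_ifs <;> omega

theorem IntervalSubadditive.le_add_card_mul {ℓ : ℕ → ℕ → ℝ} (hℓ : IntervalSubadditive ℓ)
    {Q : ℕ → Prop} [DecidablePred Q] {a b : ℕ} (hab : a ≤ b) {C r : ℝ}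
    (hfirst : ∀ j, a ≤ j → j ≤ b → (∀ k ∈ Ico a j, ¬ Q k) → ℓ a j ≤ C)
    (hnext : ∀ i j, a ≤ i → i < j → j ≤ b → Q i → (∀ k ∈ Ico (i + 1) j, ¬ Q k) →
      ℓ (i + 1) j ≤ r) :
    ℓ a b ≤ C + #{k ∈ Ico a b | Q k} * r := by
  induction hm : #{k ∈ Ico a b | Q k} generalizing a C with
  | zero =>
    have hQ : ∀ k ∈ Ico a b, ¬ Q k := filter_eq_empty_iff.mp (card_eq_zero.mp hm)
    simpa using hfirst b hab le_rfl hQ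
  | succ m ih =>
    have hne : ({k ∈ Ico a b | Q k} : Finset ℕ).Nonempty := card_pos.mp (by omega)
    obtain ⟨j, hj, hmin⟩ := exists_min_image _ id hne
    simp only [mem_filter, mem_Ico, id] at hj hmin
    obtain ⟨⟨haj, hjb⟩, hQj⟩ := hj
    have hunmarked : ∀ k ∈ Ico a j, ¬ Q k := fun k hk hQk => by
      rw [mem_Ico] at hk
      exact absurd (hmin k ⟨⟨hk.1, by omega⟩, hQk⟩) (by omega)
    have hcard : #{k ∈ Ico (j + 1) b | Q k} = m := by
      rw [card_filter_Ico_eq_add Q haj hjb, if_pos hQj, filter_false_of_mem hunmarked,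
        card_empty] at hm
      omega
    have hhead : ℓ a j ≤ C := hfirst j haj hjb.le hunmarked
    have htail : ℓ (j + 1) b ≤ r + m * r :=
      ih hjb (fun i hi hib hQ => hnext j i haj hi hib hQj hQ)
        (fun i k hi hik hkb => hnext i k (by omega) hik hkb) hcard
    have hcut := hℓ haj hjb
    push_cast
    linarith

end Intervals

namespace ConsecPartition

variable {a b : ℕ} {P : List (ℕ × ℕ)}

theorem eq_singleton_or_tail {p : ℕ × ℕ} (h : ConsecPartition a b (p :: P)) :
    p.1 = a ∧ a ≤ p.2 ∧ ((P = [] ∧ p.2 = b) ∨ ConsecPartition (p.2 + 1) b P) := by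
  obtain ⟨-, hhead, hlast, hle, hchain⟩ := h
  have hpa : p.1 = a := by simpa using hhead
  refine ⟨hpa, hpa ▸ hle p List.mem_cons_self, ?_⟩
  cases P with
  | nil => exact Or.inl ⟨rfl, by simpa using hlast⟩
  | cons q P =>
    obtain ⟨hpq, hchain⟩ := List.isChain_cons_cons.mp hchain
    exact Or.inr ⟨List.cons_ne_nil q P, by simpa using hpq,
      by simpa [List.getLast?_cons_cons] using hlast,
      fun r hr => hle r (List.mem_cons_of_mem p hr), hchain⟩

@[elab_as_elim]
theorem induction {motive : ∀ (a : ℕ) (P : List (ℕ × ℕ)), ConsecPartition a b P → Prop}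
    (singleton : ∀ {a} (h : ConsecPartition a b [(a, b)]), a ≤ b → motive a [(a, b)] h)
    (cons : ∀ {a c P} (h : ConsecPartition a b ((a, c) :: P)) (hP : ConsecPartition (c + 1) b P),
      a ≤ c → motive (c + 1) P hP → motive a ((a, c) :: P) h)
    (h : ConsecPartition a b P) : motive a P h := by
  induction P generalizing a with
  | nil => exact absurd rfl h.1
  | cons p P ih =>
    obtain ⟨i, j⟩ := p
    obtain ⟨rfl, hij, ⟨rfl, rfl⟩ | hP⟩ := h.eq_singleton_or_tail
    · exact singleton h hij
    · exact cons h hP hij (ih hP)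

protected theorem le (h : ConsecPartition a b P) : a ≤ b := by
  induction h using ConsecPartition.induction with
  | singleton _ hab => exact hab
  | cons _ _ hac hcb => omega

theorem le_fst_of_mem (h : ConsecPartition a b P) {q : ℕ × ℕ} (hq : q ∈ P) : a ≤ q.1 := by
  induction h using ConsecPartition.induction with
  | singleton => simp_all
  | cons _ _ hac ih =>
    rcases List.mem_cons.mp hq with rfl | hq
    · exact le_rfl
    · have := ih hq
      omega

theorem le_sum_map {M : Type*} [AddMonoid M] [Preorder M] [AddLeftMono M] {ℓ : ℕ → ℕ → M}
    (h : ConsecPartition a b P) (hℓ : IntervalSubadditive ℓ) :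
    ℓ a b ≤ (P.map fun q => ℓ q.1 q.2).sum := by
  induction h using ConsecPartition.induction with
  | singleton => simp
  | cons _ hP hac ih =>
    rw [List.map_cons, List.sum_cons]
    exact (hℓ hac hP.le).trans (by gcongr)

theorem card_filter_Ico_add_one_le_length (h : ConsecPartition a b P) {Q : ℕ → Prop}
    [DecidablePred Q] (hQ : ∀ p ∈ P, ∀ k, p.1 ≤ k → k < p.2 → ¬ Q k) :
    #{k ∈ Ico a b | Q k} + 1 ≤ P.length := by
  have hone : ∀ p ∈ P, #{k ∈ Ico p.1 p.2 | Q k} + 1 = 1 := fun p hp => by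
    rw [filter_false_of_mem fun k hk => hQ p hp k (mem_Ico.mp hk).1 (mem_Ico.mp hk).2, card_empty]
  simpa [List.map_congr_left hone] using
    h.le_sum_map (intervalSubadditive_card_filter_Ico_add_one Q)

end ConsecPartition

section TypeClasses

variable {α : Type*} [Fintype α] [DecidableEq α] (u : ℕ → α) (m : ℕ)

theorem sum_count_eq_self : ∑ x, Nat.count (u · = x) m = m := by
  induction m with
  | zero => simp
  | succ m ih => simp [Nat.count_succ, sum_add_distrib, ih]

theorem prod_range_apply_count {M : Type*} [CommMonoid M] (g : α → ℕ → M) :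
    ∏ k ∈ range m, g (u k) (Nat.count (u · = u k) k)
      = ∏ x, ∏ l ∈ range (Nat.count (u · = x) m), g x l := by
  induction m with
  | zero => simp
  | succ m ih =>
    have hsymbol (x : α) : ∏ l ∈ range (Nat.count (u · = x) (m + 1)), g x l
        = (∏ l ∈ range (Nat.count (u · = x) m), g x l)
          * if u m = x then g x (Nat.count (u · = x) m) else 1 := by
      rw [Nat.count_succ]
      split_ifs <;> simp [prod_range_succ]
    simp only [hsymbol, prod_mul_distrib, prod_range_succ, ih, prod_ite_eq, mem_univ, if_true]

-- The type class of the sequence has `m! / ∏ x, (count x)!` members, all of equal probability.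
theorem factorial_mul_prod_le_prod_factorial {p : α → ℝ} (hp0 : ∀ x, 0 ≤ p x)
    (hp1 : ∑ x, p x ≤ 1) :
    (m.factorial : ℝ) * ∏ k ∈ range m, p (u k)
      ≤ ∏ x, ((Nat.count (u · = x) m).factorial : ℝ) := by
  set c : α → ℕ := fun x => Nat.count (u · = x) m
  have hprod : ∏ k ∈ range m, p (u k) = ∏ x, p x ^ c x := by
    simpa using prod_range_apply_count u m fun x _ => p x
  have hclass : (Nat.multinomial univ c : ℝ) * ∏ x, p x ^ c x ≤ 1 :=
    calc (Nat.multinomial univ c : ℝ) * ∏ x, p x ^ c x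
        ≤ ∑ k ∈ piAntidiag univ m, (Nat.multinomial univ k : ℝ) * ∏ x, p x ^ k x :=
          single_le_sum (f := fun k : α → ℕ => (Nat.multinomial univ k : ℝ) * ∏ x, p x ^ k x)
            (fun k _ => mul_nonneg (Nat.cast_nonneg _)
              (prod_nonneg fun x _ => pow_nonneg (hp0 x) _))
            (by simp [mem_piAntidiag, c, sum_count_eq_self])
      _ = (∑ x, p x) ^ m := (sum_pow_eq_sum_piAntidiag univ p m).symm
      _ ≤ 1 := pow_le_one₀ (sum_nonneg fun x _ => hp0 x) hp1
  have hfactorial : (∏ x, (c x).factorial) * Nat.multinomial univ c = m.factorial := by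
    rw [Nat.multinomial_spec, sum_count_eq_self]
  rw [hprod, ← hfactorial]
  push_cast
  rw [mul_assoc]
  exact mul_le_of_le_one_right (prod_nonneg fun x _ => Nat.cast_nonneg _) hclass

end TypeClasses

section ProductEstimates

theorem pow_mul_factorial_le_prod_range_succ {s d : ℝ} (hs : 1 ≤ s) (hd : 0 ≤ d) (n : ℕ) :
    d ^ n * n.factorial ≤ ∏ l ∈ range (n + 1), (s + d * l) := by
  calc d ^ n * n.factorial = ∏ l ∈ range n, d * ((l + 1 : ℕ) : ℝ) := by
        rw [prod_mul_distrib, prod_const, card_range, ← Nat.cast_prod,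
          prod_range_add_one_eq_factorial]
    _ ≤ ∏ l ∈ range n, (s + d * ((l + 1 : ℕ) : ℝ)) :=
        prod_le_prod (fun l _ => by positivity) fun l _ => by linarith
    _ ≤ (∏ l ∈ range n, (s + d * ((l + 1 : ℕ) : ℝ))) * s :=
        le_mul_of_one_le_right (prod_nonneg fun l _ => by positivity) hs
    _ = ∏ l ∈ range (n + 1), (s + d * l) := by simp [prod_range_succ']

theorem pow_mul_factorial_le_mul_prod_range {s d : ℝ} (hs : 1 ≤ s) (hd : 1 ≤ d) {n m : ℕ}
    (hm : 0 < m) (hnm : n ≤ m) :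
    d ^ n * n.factorial ≤ d * m * ∏ l ∈ range n, (s + d * l) := by
  cases n with
  | zero =>
    have hm' : (1 : ℝ) ≤ m := mod_cast hm
    simpa using one_le_mul_of_one_le_of_one_le hd hm'
  | succ n =>
    have hnm' : ((n + 1 : ℕ) : ℝ) ≤ m := mod_cast hnm
    calc d ^ (n + 1) * (n + 1).factorial
        = d * ((n + 1 : ℕ) : ℝ) * (d ^ n * n.factorial) := by
          rw [Nat.factorial_succ, Nat.cast_mul]
          ring
      _ ≤ d * m * ∏ l ∈ range (n + 1), (s + d * l) := by
          gcongr
          exact pow_mul_factorial_le_prod_range_succ hs (by linarith) n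

theorem prod_range_add_one_add_le {D : ℝ} (hD : 0 ≤ D) {m : ℕ} (hm : 0 < m) :
    ∏ k ∈ range m, (D + 1 + k) ≤ m.factorial * (Real.exp 1 * m) ^ D := by
  have hfactor (k : ℕ) : D + 1 + k ≤ (k + 1 : ℕ) * Real.exp (D * ((k + 1 : ℕ) : ℝ)⁻¹) :=
    calc D + 1 + k = (k + 1 : ℕ) * (D * ((k + 1 : ℕ) : ℝ)⁻¹ + 1) := by
          push_cast
          field_simp
          ring
      _ ≤ _ := by gcongr; exact Real.add_one_le_exp _
  calc ∏ k ∈ range m, (D + 1 + k)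
      ≤ ∏ k ∈ range m, (k + 1 : ℕ) * Real.exp (D * ((k + 1 : ℕ) : ℝ)⁻¹) :=
        prod_le_prod (fun k _ => by positivity) fun k _ => hfactor k
    _ = m.factorial * Real.exp (D * (harmonic m : ℚ)) := by
        rw [prod_mul_distrib, ← Nat.cast_prod, prod_range_add_one_eq_factorial, ← Real.exp_sum,
          ← mul_sum, harmonic]
        push_cast
        rfl
    _ ≤ m.factorial * Real.exp (D * (1 + Real.log m)) := by
        gcongr
        exact harmonic_le_one_add_log m
    _ = m.factorial * (Real.exp 1 * m) ^ D := by
        rw [Real.rpow_def_of_pos (by positivity), Real.log_mul (by positivity) (by positivity),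
          Real.log_exp, mul_comm D]

theorem prod_range_add_mul_le {t d : ℝ} (ht : 0 ≤ t) (hd : 0 ≤ d) {D : ℝ} (hD : 0 ≤ D)
    (htD : t ≤ d * (D + 1)) {m : ℕ} (hm : 0 < m) :
    ∏ k ∈ range m, (t + d * k) ≤ d ^ m * (m.factorial * (Real.exp 1 * m) ^ D) :=
  calc ∏ k ∈ range m, (t + d * k)
      ≤ ∏ k ∈ range m, d * (D + 1 + k) :=
        prod_le_prod (fun k _ => by positivity) fun k _ => by linarith
    _ = d ^ m * ∏ k ∈ range m, (D + 1 + k) := by rw [prod_mul_distrib, prod_const, card_range]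
    _ ≤ _ := by gcongr; exact prod_range_add_one_add_le hD hm

end ProductEstimates

section Urn

variable {α : Type*} [Fintype α] [DecidableEq α]

/-- The probability that a Pólya urn assigns to the symbol `x` after the symbols
`u 0, …, u (k - 1)`, when the counts start at `s` and each symbol adds `d` to its own count. Between
two rescales, Algorithm RFD predicts in this way. -/
noncomputable def urnProb (s : α → ℝ) (d : ℝ) (u : ℕ → α) (k : ℕ) (x : α) : ℝ :=
  (s x + d * Nat.count (u · = x) k) / (∑ y, s y + d * k)

variable {s : α → ℝ} {d : ℝ} (u : ℕ → α)

theorem urnProb_pos (hs : ∀ x, 0 < s x) (hd : 0 ≤ d) (k : ℕ) (x : α) : 0 < urnProb s d u k x := by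
  have hsum : 0 < ∑ y, s y := sum_pos (fun y _ => hs y) ⟨x, mem_univ x⟩
  have hx := hs x
  unfold urnProb
  positivity

theorem prod_urnProb (s : α → ℝ) (d : ℝ) (m : ℕ) :
    ∏ k ∈ range m, urnProb s d u k (u k)
      = (∏ x, ∏ l ∈ range (Nat.count (u · = x) m), (s x + d * l))
        / ∏ k ∈ range m, (∑ y, s y + d * k) := by
  rw [← prod_range_apply_count u m fun x l => s x + d * l, ← prod_div_distrib]
  rfl

theorem pow_mul_prod_factorial_count_le (hs : ∀ x, 1 ≤ s x) (hd : 1 ≤ d) {m : ℕ} (hm : 0 < m) :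
    d ^ m * ∏ x, ((Nat.count (u · = x) m).factorial : ℝ)
      ≤ (d * m) ^ Fintype.card α
        * ∏ x, ∏ l ∈ range (Nat.count (u · = x) m), (s x + d * l) :=
  calc d ^ m * ∏ x, ((Nat.count (u · = x) m).factorial : ℝ)
      = ∏ x, d ^ Nat.count (u · = x) m * (Nat.count (u · = x) m).factorial := by
        rw [prod_mul_distrib, prod_pow_eq_pow_sum, sum_count_eq_self]
    _ ≤ ∏ x, d * m * ∏ l ∈ range (Nat.count (u · = x) m), (s x + d * l) :=
        prod_le_prod (fun x _ => by positivity) fun x _ =>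
          pow_mul_factorial_le_mul_prod_range (hs x) hd hm (Nat.count_le _)
    _ = _ := by rw [prod_mul_distrib, prod_const, card_univ]

theorem prod_le_mul_prod_urnProb {p : α → ℝ} (hp0 : ∀ x, 0 ≤ p x) (hp1 : ∑ x, p x ≤ 1)
    (hs : ∀ x, 1 ≤ s x) (hd : 1 ≤ d) {D : ℝ} (hD : 0 ≤ D) (hsum : ∑ x, s x ≤ d * (D + 1))
    {m : ℕ} (hm : 0 < m) :
    ∏ k ∈ range m, p (u k)
      ≤ (d * m) ^ Fintype.card α * (Real.exp 1 * m) ^ D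
        * ∏ k ∈ range m, urnProb s d u k (u k) := by
  set E : ℝ := (Real.exp 1 * m) ^ D
  set c : α → ℕ := fun x => Nat.count (u · = x) m
  have hs0 (x : α) : 0 < s x := zero_lt_one.trans_le (hs x)
  have hE : 0 ≤ E := by positivity
  have hp : 0 ≤ ∏ k ∈ range m, p (u k) := prod_nonneg fun k _ => hp0 _
  have htotal : 0 < ∑ x, s x := sum_pos (fun x _ => hs0 x) ⟨u 0, mem_univ _⟩
  have hden : 0 < ∏ k ∈ range m, (∑ x, s x + d * k) := prod_pos fun k _ => by positivity
  rw [prod_urnProb, ← mul_div_assoc, le_div_iff₀ hden]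
  calc (∏ k ∈ range m, p (u k)) * ∏ k ∈ range m, (∑ x, s x + d * k)
      ≤ (∏ k ∈ range m, p (u k)) * (d ^ m * (m.factorial * E)) := by
        gcongr
        exact prod_range_add_mul_le htotal.le (by linarith) hD hsum hm
    _ = E * (d ^ m * (m.factorial * ∏ k ∈ range m, p (u k))) := by ring
    _ ≤ E * (d ^ m * ∏ x, ((c x).factorial : ℝ)) := by
        gcongr
        exact factorial_mul_prod_le_prod_factorial u m hp0 hp1
    _ ≤ E * ((d * m) ^ Fintype.card α * ∏ x, ∏ l ∈ range (c x), (s x + d * l)) :=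
        mul_le_mul_of_nonneg_left (pow_mul_prod_factorial_count_le u hs hd hm) hE
    _ = _ := by ring

theorem sum_logb_sub_logb_urnProb_le {β : ℝ} (hβ : 1 < β) {p : α → ℝ} (hp0 : ∀ x, 0 ≤ p x)
    (hp1 : ∑ x, p x ≤ 1) (hs : ∀ x, 1 ≤ s x) (hd : 1 ≤ d) {D : ℝ} (hD : 0 ≤ D)
    (hsum : ∑ x, s x ≤ d * (D + 1)) {m : ℕ} (hm : 0 < m) (hpu : ∀ k < m, p (u k) ≠ 0) :
    ∑ k ∈ range m, (Real.logb β (p (u k)) - Real.logb β (urnProb s d u k (u k)))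
      ≤ D * Real.logb β (Real.exp 1 * m) + Fintype.card α * Real.logb β (d * m) := by
  have hp : ∀ k ∈ range m, 0 < p (u k) := fun k hk =>
    (hp0 _).lt_of_ne' (hpu k (mem_range.mp hk))
  have hurn : ∀ k ∈ range m, 0 < urnProb s d u k (u k) := fun k _ =>
    urnProb_pos u (fun x => zero_lt_one.trans_le (hs x)) (by linarith) k _
  have hlog := Real.logb_le_logb_of_le hβ (prod_pos hp)
    (prod_le_mul_prod_urnProb u hp0 hp1 hs hd hD hsum hm)
  rw [Real.logb_mul (by positivity) (prod_pos hurn).ne', Real.logb_mul (by positivity)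
    (by positivity), Real.logb_pow, Real.logb_rpow_eq_mul_logb_of_pos (by positivity),
    Real.logb_prod _ _ fun k hk => (hp k hk).ne',
    Real.logb_prod _ _ fun k hk => (hurn k hk).ne'] at hlog
  rw [sum_sub_distrib]
  linarith

end Urn

section RFD

variable {N : ℕ} {cf : ℝ} {d T : ℕ} {s0 : Fin N → ℕ} {xs : ℕ → Fin N}

theorem max_one_floor_mul_le (hc0 : 0 ≤ cf) (hc1 : cf ≤ 1) {s : ℕ} (hs : 1 ≤ s) :
    ((max 1 ⌊cf * s⌋₊ : ℕ) : ℝ) ≤ 1 + cf * (s - 1) := by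
  have hs' : (1 : ℝ) ≤ s := mod_cast hs
  rw [Nat.cast_max, Nat.cast_one]
  refine max_le (le_add_of_nonneg_right (mul_nonneg hc0 (by linarith))) ?_
  have := Nat.floor_le (show 0 ≤ cf * s by positivity)
  linarith

theorem RFDcounts_succ (k : ℕ) (x : Fin N) :
    RFDcounts cf d T s0 xs (k + 1) x
      = (if T < RFDtotal cf d T s0 xs k + d then max 1 ⌊cf * RFDcounts cf d T s0 xs k x⌋₊
          else RFDcounts cf d T s0 xs k x) + if x = xs k then d else 0 := by
  simp only [RFDcounts, RFDupdate, RFDtotal, add_ite, add_zero, ite_apply]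
  rfl

theorem RFDtotal_succ (k : ℕ) :
    RFDtotal cf d T s0 xs (k + 1)
      = (∑ x, if T < RFDtotal cf d T s0 xs k + d then max 1 ⌊cf * RFDcounts cf d T s0 xs k x⌋₊
          else RFDcounts cf d T s0 xs k x) + d := by
  conv_lhs => rw [RFDtotal]
  simp [RFDcounts_succ, sum_add_distrib]

theorem RFDcounts_pos (hs0 : ∀ x, 1 ≤ s0 x) (k : ℕ) (x : Fin N) :
    1 ≤ RFDcounts cf d T s0 xs k x := by
  induction k with
  | zero => exact hs0 x
  | succ k ih =>
    rw [RFDcounts_succ]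
    refine le_add_right ?_
    split_ifs
    exacts [le_max_left _ _, ih]

theorem le_RFDtotal (hs0 : ∀ x, 1 ≤ s0 x) (k : ℕ) : N ≤ RFDtotal cf d T s0 xs k := by
  simpa [RFDtotal] using
    card_nsmul_le_sum univ (RFDcounts cf d T s0 xs k) 1 fun x _ => RFDcounts_pos hs0 k x

theorem RFDtotal_succ_le_of_rescale (hs0 : ∀ x, 1 ≤ s0 x) (hc0 : 0 ≤ cf) (hc1 : cf ≤ 1) {k : ℕ}
    (h : T < RFDtotal cf d T s0 xs k + d) :
    (RFDtotal cf d T s0 xs (k + 1) : ℝ) ≤ N + cf * (RFDtotal cf d T s0 xs k - N) + d := by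
  simp only [RFDtotal_succ, if_pos h, Nat.cast_add, Nat.cast_sum]
  gcongr
  calc ∑ x, ((max 1 ⌊cf * RFDcounts cf d T s0 xs k x⌋₊ : ℕ) : ℝ)
      ≤ ∑ x, (1 + cf * ((RFDcounts cf d T s0 xs k x : ℝ) - 1)) :=
        sum_le_sum fun x _ => max_one_floor_mul_le hc0 hc1 (RFDcounts_pos hs0 k x)
    _ = N + cf * (RFDtotal cf d T s0 xs k - N) := by
        simp [RFDtotal, sum_add_distrib, ← mul_sum]

theorem RFDtotal_le (hs0 : ∀ x, 1 ≤ s0 x) (hc0 : 0 ≤ cf) (hc1 : cf ≤ 1)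
    (hT : (d : ℝ) ≤ (1 - cf) * ((T : ℝ) - N)) (hsum : ∑ x, s0 x ≤ T) (k : ℕ) :
    RFDtotal cf d T s0 xs k ≤ T := by
  induction k with
  | zero => exact hsum
  | succ k ih =>
    rcases le_or_gt (RFDtotal cf d T s0 xs k + d) T with h | h
    · simp only [RFDtotal_succ, if_neg h.not_gt]
      exact h
    · have hrescale := RFDtotal_succ_le_of_rescale hs0 hc0 hc1 h
      have hshrink : cf * (RFDtotal cf d T s0 xs k : ℝ) ≤ cf * T := by gcongr
      have hle : (RFDtotal cf d T s0 xs (k + 1) : ℝ) ≤ T := by linarith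
      exact_mod_cast hle

theorem RFDrescaleAt_succ {k : ℕ} :
    RFDrescaleAt cf d T s0 xs (k + 1) ↔ T < RFDtotal cf d T s0 xs k + d := by
  simp [RFDrescaleAt]

theorem RFDcounts_add {a m : ℕ}
    (hno : ∀ k ∈ Ico (a + 1) (a + m + 1), ¬ RFDrescaleAt cf d T s0 xs k) (x : Fin N) :
    RFDcounts cf d T s0 xs (a + m) x
      = RFDcounts cf d T s0 xs a x + d * Nat.count (fun l => xs (a + l) = x) m := by
  induction m with
  | zero => simp
  | succ m ih =>
    have hm : ¬ T < RFDtotal cf d T s0 xs (a + m) + d :=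
      RFDrescaleAt_succ.not.mp (hno (a + m + 1) (mem_Ico.mpr ⟨by omega, by omega⟩))
    rw [← add_assoc, RFDcounts_succ, if_neg hm,
      ih fun k hk => hno k (Ico_subset_Ico_right (by omega) hk), Nat.count_succ]
    simp only [eq_comm (a := x)]
    split_ifs <;> ring

theorem RFDtotal_add {a m : ℕ}
    (hno : ∀ k ∈ Ico (a + 1) (a + m + 1), ¬ RFDrescaleAt cf d T s0 xs k) :
    RFDtotal cf d T s0 xs (a + m) = RFDtotal cf d T s0 xs a + d * m := by
  simp [RFDtotal, RFDcounts_add hno, sum_add_distrib, ← mul_sum,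
    sum_count_eq_self fun l => xs (a + l)]

theorem RFDprob_add {a m : ℕ}
    (hno : ∀ k ∈ Ico (a + 1) (a + m + 1), ¬ RFDrescaleAt cf d T s0 xs k) (x : Fin N) :
    RFDprob cf d T s0 xs (a + m) x
      = urnProb (fun y => (RFDcounts cf d T s0 xs a y : ℝ)) d (fun l => xs (a + l)) m x := by
  rw [RFDprob, urnProb, RFDcounts_add hno, RFDtotal_add hno, RFDtotal]
  push_cast
  rfl

theorem mul_le_sub_of_no_rescale (hs0 : ∀ x, 1 ≤ s0 x)
    (htotal : ∀ k, RFDtotal cf d T s0 xs k ≤ T) {a m : ℕ}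
    (hno : ∀ k ∈ Ico (a + 1) (a + m + 1), ¬ RFDrescaleAt cf d T s0 xs k) :
    (d : ℝ) * m ≤ (T : ℝ) - N := by
  have h := htotal (a + m)
  rw [RFDtotal_add hno] at h
  have h' : N + d * m ≤ T := (Nat.add_le_add_right (le_RFDtotal hs0 a) _).trans h
  rw [le_sub_iff_add_le']
  exact_mod_cast h'

theorem RFDcodeLen_sub_distCodeLen (a m : ℕ) (p : Fin N → ℝ) :
    RFDcodeLen cf d T s0 xs (a + 1) (a + m) - distCodeLen p xs (a + 1) (a + m)
      = ∑ k ∈ range m, (Real.logb 2 (p (xs (a + k)))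
          - Real.logb 2 (RFDprob cf d T s0 xs (a + k) (xs (a + k)))) := by
  have hshift (f : ℕ → ℝ) : ∑ k ∈ Icc (a + 1) (a + m), f (k - 1) = ∑ k ∈ range m, f (a + k) := by
    rw [← Ico_add_one_right_eq_Icc, ← sum_Ico_add' (fun k => f (k - 1)) a (a + m) 1,
      sum_Ico_eq_sum_range]
    simp
  rw [RFDcodeLen, distCodeLen, hshift fun k => Real.logb 2 (p (xs k)),
    hshift fun k => Real.logb 2 (RFDprob cf d T s0 xs k (xs k)), sum_sub_distrib]
  ring

theorem RFDcodeLen_sub_distCodeLen_le_of_no_rescale (hs0 : ∀ x, 1 ≤ s0 x) (hd : 1 ≤ d)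
    (htotal : ∀ k, RFDtotal cf d T s0 xs k ≤ T) {a b : ℕ} (hab : a < b)
    (hno : ∀ k ∈ Ico (a + 1) b, ¬ RFDrescaleAt cf d T s0 xs k) {D : ℝ} (hD : 0 ≤ D)
    (hstart : (RFDtotal cf d T s0 xs a : ℝ) ≤ d * (D + 1)) {L : ℝ} (hL : L = ((T : ℝ) - N) / d)
    {p : Fin N → ℝ} (hp0 : ∀ x, 0 ≤ p x) (hp1 : ∑ x, p x ≤ 1)
    (hp : ∀ k ∈ Ico a b, p (xs k) ≠ 0) :
    RFDcodeLen cf d T s0 xs (a + 1) b - distCodeLen p xs (a + 1) b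
      ≤ D * Real.logb 2 (Real.exp 1 * (L + 1)) + N * Real.logb 2 (d * (L + 1)) := by
  obtain ⟨m, rfl⟩ : ∃ m, b = a + (m + 1) := ⟨b - a - 1, by omega⟩
  have hd' : (1 : ℝ) ≤ d := mod_cast hd
  have hd0 : (0 : ℝ) < d := by linarith
  have hm : ((m + 1 : ℕ) : ℝ) ≤ L + 1 := by
    rw [Nat.cast_add_one, hL, add_le_add_iff_right, le_div_iff₀' hd0]
    exact mul_le_sub_of_no_rescale hs0 htotal hno
  have hurn := sum_logb_sub_logb_urnProb_le (β := 2) (fun l => xs (a + l)) one_lt_two hp0 hp1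
    (s := fun y => (RFDcounts cf d T s0 xs a y : ℝ)) (fun y => mod_cast RFDcounts_pos hs0 a y) hd'
    hD (by simpa [RFDtotal] using hstart) m.succ_pos
    fun k hk => hp (a + k) (mem_Ico.mpr ⟨by omega, by omega⟩)
  rw [Fintype.card_fin] at hurn
  have hsteps : ∀ k ∈ range (m + 1), RFDprob cf d T s0 xs (a + k) (xs (a + k))
      = urnProb (fun y => (RFDcounts cf d T s0 xs a y : ℝ)) d (fun l => xs (a + l)) k
          (xs (a + k)) := fun k hk =>
    RFDprob_add (fun i hi => hno i (Ico_subset_Ico_right (by grind) hi)) _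
  rw [RFDcodeLen_sub_distCodeLen, sum_congr rfl fun k hk => by rw [hsteps k hk]]
  refine hurn.trans ?_
  have : (0 : ℝ) < (m + 1 : ℕ) := by positivity
  gcongr <;> norm_num

theorem intervalSubadditive_RFDcodeLen_sub_distCodeLen (p : Fin N → ℝ) :
    IntervalSubadditive fun i j => RFDcodeLen cf d T s0 xs i j - distCodeLen p xs i j := by
  intro i j k hij hjk
  simp only [RFDcodeLen, distCodeLen]
  rw [sum_Icc_eq_sum_Icc_add_sum_Icc _ hij hjk, sum_Icc_eq_sum_Icc_add_sum_Icc _ hij hjk]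
  linarith

theorem intervalSubadditive_RFDcodeLen_sub_card_mul (Q : ℕ → Prop) [DecidablePred Q] {r : ℝ}
    (hr : 0 ≤ r) :
    IntervalSubadditive fun i j => RFDcodeLen cf d T s0 xs i j - #{l ∈ Ico i j | Q l} * r := by
  intro i j k hij hjk
  simp only [RFDcodeLen]
  rw [sum_Icc_eq_sum_Icc_add_sum_Icc _ hij hjk, card_filter_Ico_eq_add Q hij hjk]
  push_cast
  split_ifs <;> linarith

theorem mul_logb_add_mul_logb_le_rBound {d : ℕ} (hd : 0 < d) {A z : ℝ} (hA : 0 ≤ A) (hz : 0 < z)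
    (N : ℕ) :
    A * Real.logb 2 (Real.exp 1 * z) + N * Real.logb 2 (d * z) ≤ rBound N d A z := by
  have hexp : Real.logb 2 (Real.exp (A + 1)) = (A + 1) * Real.logb 2 (Real.exp 1) := by
    rw [← Real.logb_rpow_eq_mul_logb_of_pos (Real.exp_pos 1), Real.exp_one_rpow]
  have hlogA : 0 ≤ Real.logb 2 (A + 1) := Real.logb_nonneg one_lt_two (by linarith)
  have hloge : 0 ≤ Real.logb 2 (Real.exp 1) :=
    Real.logb_nonneg one_lt_two (Real.one_le_exp zero_le_one)
  rw [rBound, Real.logb_mul (by positivity) (by positivity), Real.logb_mul (by positivity) hz.ne',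
    Real.logb_mul (by positivity) (by positivity), hexp]
  linarith

theorem rBound_nonneg {d : ℕ} (hd : 0 < d) {A z : ℝ} (hA : 0 ≤ A) (hz : 1 ≤ z) (N : ℕ) :
    0 ≤ rBound N d A z := by
  have hd' : (1 : ℝ) ≤ d := mod_cast hd
  have hlogz : 0 ≤ Real.logb 2 z := Real.logb_nonneg one_lt_two hz
  have hlogd : 0 ≤ Real.logb 2 (d : ℝ) := Real.logb_nonneg one_lt_two hd'
  have hlogA : 0 ≤ Real.logb 2 ((A + 1) * Real.exp (A + 1)) :=
    Real.logb_nonneg one_lt_two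
      (one_le_mul_of_one_le_of_one_le (by linarith) (Real.one_le_exp (by linarith)))
  unfold rBound
  positivity

open scoped Classical in
theorem RFDcodeLen_sub_distCodeLen_le (hs0 : ∀ x, 1 ≤ s0 x) (hd : 1 ≤ d) (hc0 : 0 ≤ cf)
    (hc1 : cf ≤ 1) (htotal : ∀ k, RFDtotal cf d T s0 xs k ≤ T)
    {L : ℝ} (hL : L = ((T : ℝ) - N) / d) {A : ℝ} (hA : A = (N : ℝ) / d + cf * L)
    {a b : ℕ} (hab : a < b) {p : Fin N → ℝ} (hp0 : ∀ x, 0 ≤ p x) (hp1 : ∑ x, p x ≤ 1)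
    (hp : ∀ k ∈ Ico a b, p (xs k) ≠ 0) :
    RFDcodeLen cf d T s0 xs (a + 1) b - distCodeLen p xs (a + 1) b
      ≤ (1 - cf) * L * Real.logb 2 (Real.exp 1 * (L + 1)) + rBound N d A (L + 1)
        + #{k ∈ Ico (a + 1) b | RFDrescaleAt cf d T s0 xs k} * rBound N d A (L + 1) := by
  have hd0 : (0 : ℝ) < d := mod_cast hd
  have htotal' (k : ℕ) : (RFDtotal cf d T s0 xs k : ℝ) ≤ T := mod_cast htotal k
  have hNT : (N : ℝ) ≤ T := mod_cast (le_RFDtotal hs0 0).trans (htotal 0)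
  have hL0 : 0 ≤ L := hL ▸ div_nonneg (sub_nonneg.mpr hNT) hd0.le
  have hA0 : 0 ≤ A := by rw [hA]; positivity
  have hdL : (d : ℝ) * L = T - N := by rw [hL]; field_simp
  have hdA : (d : ℝ) * A = N + cf * (T - N) := by rw [hA, ← hdL]; field_simp
  have hr := mul_logb_add_mul_logb_le_rBound hd hA0 (by linarith : 0 < L + 1) N
  refine (intervalSubadditive_RFDcodeLen_sub_distCodeLen p).le_add_card_mul hab
    (fun j haj hjb hno => ?first) (fun i j hai hij hjb hi hno => ?next)
  case first =>
    have hD : 0 ≤ A + (1 - cf) * L := add_nonneg hA0 (mul_nonneg (by linarith) hL0)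
    have hstart : (RFDtotal cf d T s0 xs a : ℝ) ≤ d * (A + (1 - cf) * L + 1) :=
      (htotal' a).trans (by linear_combination hd0.le - hdA - (1 - cf) * hdL)
    have hstretch := RFDcodeLen_sub_distCodeLen_le_of_no_rescale hs0 hd htotal haj hno hD hstart hL
      hp0 hp1 fun k hk => hp k (Ico_subset_Ico_right hjb hk)
    linarith
  case next =>
    obtain ⟨i, rfl⟩ : ∃ i', i = i' + 1 := ⟨i - 1, by omega⟩
    have hstart : (RFDtotal cf d T s0 xs (i + 1) : ℝ) ≤ d * (A + 1) := by
      have hrescale := RFDtotal_succ_le_of_rescale hs0 hc0 hc1 (RFDrescaleAt_succ.mp hi)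
      have hshrink : cf * (RFDtotal cf d T s0 xs i : ℝ) ≤ cf * T := by gcongr; exact htotal i
      linarith
    exact (RFDcodeLen_sub_distCodeLen_le_of_no_rescale hs0 hd htotal hij hno hA0 hstart hL hp0 hp1
      fun k hk => hp k (Ico_subset_Ico (by omega) hjb hk)).trans hr

theorem stmt14_general (hd : 1 ≤ d) (hc0 : 0 ≤ cf) (hc1 : cf ≤ 1)
    (hT : (d : ℝ) ≤ (1 - cf) * ((T : ℝ) - N)) (hs0 : ∀ x, 1 ≤ s0 x) (hsum : ∑ x, s0 x ≤ T)
    {a b : ℕ} (ha : 1 ≤ a) {R : List (ℕ × ℕ)} (hR : RFDrescalePartition cf d T s0 xs a b R)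
    {S : List (ℕ × ℕ)} (hS : ConsecPartition a b S) {pI : ℕ × ℕ → Fin N → ℝ}
    (hpI : ∀ q ∈ S, (∀ x, 0 ≤ pI q x) ∧ ∑ x, pI q x ≤ 1)
    (hpos : ∀ q ∈ S, ∀ k ∈ Icc q.1 q.2, pI q (xs (k - 1)) ≠ 0)
    {L : ℝ} (hL : L = ((T : ℝ) - N) / d) {A : ℝ} (hA : A = (N : ℝ) / d + cf * L) :
    RFDcodeLen cf d T s0 xs a b - pwsCodeLen S pI xs ≤
      (S.length : ℝ) * ((1 - cf) * L * Real.logb 2 (Real.exp 1 * (L + 1))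
          + Real.logb 2 ((1 - cf) * L) + rBound N d A (L + 1))
      + ((R.length : ℝ) - 1) * rBound N d A (L + 1) := by
  classical
  have hd0 : (0 : ℝ) < d := mod_cast hd
  have hcL : 1 ≤ (1 - cf) * L := by rwa [hL, ← mul_div_assoc, one_le_div hd0]
  have hlog : 0 ≤ Real.logb 2 ((1 - cf) * L) := Real.logb_nonneg one_lt_two hcL
  have hL0 : 0 ≤ L := (pos_of_mul_pos_right (by linarith) (sub_nonneg.mpr hc1)).le
  have hA0 : 0 ≤ A := by rw [hA]; positivity
  have htotal := RFDtotal_le (xs := xs) hs0 hc0 hc1 hT hsum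
  set r := rBound N d A (L + 1)
  have hr : 0 ≤ r := rBound_nonneg hd hA0 (by linarith) N
  set C := (1 - cf) * L * Real.logb 2 (Real.exp 1 * (L + 1)) + Real.logb 2 ((1 - cf) * L) + r
  have hsegment : ∀ q ∈ S, RFDcodeLen cf d T s0 xs q.1 q.2
      - #{k ∈ Ico q.1 q.2 | RFDrescaleAt cf d T s0 xs k} * r
        ≤ distCodeLen (pI q) xs q.1 q.2 + C := by
    rintro ⟨i, j⟩ hq
    obtain ⟨i, rfl⟩ : ∃ i', i = i' + 1 := ⟨i - 1, by have := hS.le_fst_of_mem hq; grind⟩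
    have hij : i + 1 ≤ j := hS.2.2.2.1 _ hq
    have h := RFDcodeLen_sub_distCodeLen_le hs0 hd hc0 hc1 htotal hL hA hij (hpI _ hq).1
      (hpI _ hq).2 fun k hk => hpos _ hq (k + 1) (by grind)
    linarith
  have hcut := (hS.le_sum_map (intervalSubadditive_RFDcodeLen_sub_card_mul _ hr)).trans
    (List.sum_le_sum hsegment)
  rw [List.sum_map_add, List.map_const', List.sum_replicate, nsmul_eq_mul] at hcut
  have hrescales : (#{k ∈ Ico a b | RFDrescaleAt cf d T s0 xs k} : ℝ) ≤ (R.length : ℝ) - 1 := by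
    rw [le_sub_iff_add_le]
    exact_mod_cast hR.1.card_filter_Ico_add_one_le_length hR.2.1
  have hcost := mul_le_mul_of_nonneg_right hrescales hr
  have hpws : pwsCodeLen S pI xs = (S.map fun q => distCodeLen (pI q) xs q.1 q.2).sum := rfl
  linarith

end RFD

/-- Theorem 1: with `A = N/d + c·L`, `L = (T-N)/d` and `r` as above,
for any realization of Algorithm RFD on `x^n` with rescale partition `R` and any
piecewise stationary model `PWS` with partition `S`:
`ℓ(x^n; RFD) - ℓ(x^n; PWS) ≤ |S|·[(1-c)·L·log₂(e·(L+1)) + log₂((1-c)·L) + r(L+1)]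
  + (|R| - 1)·r(L+1)`.
If `PWS` assigns probability `0` somewhere, its code length is `+∞` and the claim is
trivial (first disjunct). -/
theorem stmt14 (N d T : ℕ) (cf : ℝ) (hN : 1 < N)
    (s0 : Fin N → ℕ) (xs : ℕ → Fin N)
    (hd : 1 ≤ d) (hc0 : 0 ≤ cf) (hc1 : cf < 1)
    (hT : (d : ℝ) ≤ (1 - cf) * ((T : ℝ) - N))
    (hs0 : ∀ x, 1 ≤ s0 x) (hsum : ∑ x, s0 x ≤ T)
    (n : ℕ) (hn : 1 ≤ n)
    (R : List (ℕ × ℕ)) (hR : RFDrescalePartition cf d T s0 xs 1 n R)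
    (S : List (ℕ × ℕ)) (hS : ConsecPartition 1 n S)
    (pI : ℕ × ℕ → Fin N → ℝ)
    (hpI : ∀ q ∈ S, (∀ x, 0 ≤ pI q x) ∧ ∑ x, pI q x = 1)
    (L : ℝ) (hL : L = ((T : ℝ) - N) / d)
    (A : ℝ) (hA : A = (N : ℝ) / d + cf * L) :
    (∃ q ∈ S, ∃ k ∈ Finset.Icc q.1 q.2, pI q (xs (k - 1)) = 0) ∨
      RFDcodeLen cf d T s0 xs 1 n - pwsCodeLen S pI xs ≤
        (S.length : ℝ) * ((1 - cf) * L * Real.logb 2 (Real.exp 1 * (L + 1))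
            + Real.logb 2 ((1 - cf) * L) + rBound N d A (L + 1))
        + ((R.length : ℝ) - 1) * rBound N d A (L + 1) :=
  or_iff_not_imp_left.mpr fun hpos => stmt14_general hd hc0 hc1.le hT hs0 hsum le_rfl hR hS
    (fun q hq => ⟨(hpI q hq).1, (hpI q hq).2.le⟩) (by push Not at hpos; exact hpos) hL hA
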